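/- (Sharper gap bound for TV robust sets.) Consider an RMDP whose robust sets are the TV robust sets of radius ρ ∈ (0,1), i.e., 𝒫(s,a;P_h) = 𝒫_ρ(s,a;P_h), for an arbitrary collection of nominal kernels P = {P_h}_{h=1}^H. Then for every Markov policy π and every step h ∈ {1,…,H}: max_{(s,a)∈S×A} Q^π_h(s,a) − min_{(s,a)∈S×A} Q^π_h(s,a) ≤ (1 − (1−ρ)^{H−h+1})/ρ, and max_{s∈S} V^π_h(s) − min_{s∈S} V^π_h(s) ≤ (1 − (1−ρ)^{H−h+1})/ρ. -/

import Mathlib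

/-!
The TV ball around each nominal kernel is compact, so every linear functional `p ↦ E_p[f]`
attains its minimum on it. Choosing minimisers backwards in time, each against the value function
produced by the later choices, gives one admissible kernel collection that minimises all value
functions simultaneously (`exists_worst_kernel`); the robust value functions are therefore the
ordinary value functions of this collection, whose kernels are moreover greedy against its own
value function `V`.

The TV ball also contains `(1 - ρ) P_h(· | s, a) + ρ δ_x`, for `x` any state. Taking for `x` a
minimiser of `V_{h+1}`, greediness gives
`Q_h(s, a) ≤ 1 + (1 - ρ) max V_{h+1} + ρ min V_{h+1}`, while `Q_h(s', a') ≥ min V_{h+1}`. Hence the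
gap at step `h` is at most `1 + (1 - ρ) c`, where `c` is the gap at step `h + 1`, and the bound
`(1 - (1 - ρ)^k) / ρ` is the solution of `g (k + 1) = 1 + (1 - ρ) g k`, `g 0 = 0`.
-/

open Finset

section RMDPDefs

variable {S A : Type*} [Fintype S] [Fintype A]

/-- `p` is a probability distribution on the finite set `S`. -/
def IsDist (p : S → ℝ) : Prop := (∀ s, 0 ≤ p s) ∧ ∑ s, p s = 1

/-- Expectation of `f` under `p`. -/
def Eexp (p f : S → ℝ) : ℝ := ∑ s, p s * f s

/-- Total-variation distance between `p` and `q` (no absolute continuity assumed). -/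
noncomputable def TV (p q : S → ℝ) : ℝ := (∑ s, |p s - q s|) / 2

/-- Value function `V^{π,P̃}_h` of a Markov policy `π` under the kernel collection `Pk`,
defined by the backward recursion `V_{H+1} ≡ 0`,
`V_h(s) = ∑_a π_h(a|s) (R_h(s,a) + E_{P̃_h(·|s,a)}[V_{h+1}])`. -/
noncomputable def kerV (H : ℕ) (R : ℕ → S → A → ℝ) (Pk : ℕ → S → A → S → ℝ)
    (π : ℕ → S → A → ℝ) (h : ℕ) : S → ℝ := fun s =>
  if _hle : H + 1 ≤ h then 0
  else ∑ a : A, π h s a * (R h s a + Eexp (Pk h s a) (kerV H R Pk π (h + 1)))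
termination_by H + 1 - h
decreasing_by omega

/-- State-action value function `Q^{π,P̃}_h` of `π` under the kernel collection `Pk`. -/
noncomputable def kerQ (H : ℕ) (R : ℕ → S → A → ℝ) (Pk : ℕ → S → A → S → ℝ)
    (π : ℕ → S → A → ℝ) (h : ℕ) (s : S) (a : A) : ℝ :=
  R h s a + Eexp (Pk h s a) (kerV H R Pk π (h + 1))

/-- A kernel collection is admissible if each of its kernels lies in the corresponding
robust set (S×A-rectangularity). -/
def Admissible (H : ℕ) (Rob : ℕ → S → A → Set (S → ℝ))
    (Pk : ℕ → S → A → S → ℝ) : Prop :=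
  ∀ h s a, 1 ≤ h → h ≤ H → Pk h s a ∈ Rob h s a

/-- Robust value function `V^π_h(s)`: infimum over admissible kernel collections. -/
noncomputable def robV (H : ℕ) (R : ℕ → S → A → ℝ) (Rob : ℕ → S → A → Set (S → ℝ))
    (π : ℕ → S → A → ℝ) (h : ℕ) (s : S) : ℝ :=
  sInf {x : ℝ | ∃ Pk : ℕ → S → A → S → ℝ, Admissible H Rob Pk ∧ x = kerV H R Pk π h s}

/-- Robust state-action value function `Q^π_h(s,a)`. -/
noncomputable def robQ (H : ℕ) (R : ℕ → S → A → ℝ) (Rob : ℕ → S → A → Set (S → ℝ))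
    (π : ℕ → S → A → ℝ) (h : ℕ) (s : S) (a : A) : ℝ :=
  sInf {x : ℝ | ∃ Pk : ℕ → S → A → S → ℝ, Admissible H Rob Pk ∧ x = kerQ H R Pk π h s a}

/-- `π` is a Markov policy for horizon `H`. -/
def IsPolicy (H : ℕ) (π : ℕ → S → A → ℝ) : Prop :=
  ∀ h s, 1 ≤ h → h ≤ H → IsDist (π h s)

/-- Optimal robust value function `V*_h(s) = sup_π V^π_h(s)`. -/
noncomputable def optV (H : ℕ) (R : ℕ → S → A → ℝ) (Rob : ℕ → S → A → Set (S → ℝ))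
    (h : ℕ) (s : S) : ℝ :=
  sSup {x : ℝ | ∃ π : ℕ → S → A → ℝ, IsPolicy H π ∧ x = robV H R Rob π h s}

/-- Optimal robust state-action value function `Q*_h(s,a) = sup_π Q^π_h(s,a)`. -/
noncomputable def optQ (H : ℕ) (R : ℕ → S → A → ℝ) (Rob : ℕ → S → A → Set (S → ℝ))
    (h : ℕ) (s : S) (a : A) : ℝ :=
  sSup {x : ℝ | ∃ π : ℕ → S → A → ℝ, IsPolicy H π ∧ x = robQ H R Rob π h s a}

/-- The total-variation robust sets `𝒫_ρ(s,a;P_h)` of radius `ρ` around the nominal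
kernels `P`. -/
def TVset (ρ : ℝ) (P : ℕ → S → A → S → ℝ) : ℕ → S → A → Set (S → ℝ) :=
  fun h s a => {Pt : S → ℝ | IsDist Pt ∧ TV Pt (P h s a) ≤ ρ}

open Classical in
/-- The Markov policy induced by a deterministic policy. -/
noncomputable def detPol (πd : ℕ → S → A) : ℕ → S → A → ℝ :=
  fun h s a => if a = πd h s then 1 else 0

end RMDPDefs

section Helpers

variable {S A : Type*} [Fintype S] [Fintype A]

lemma Eexp_mono {p f g : S → ℝ} (hp : IsDist p) (h : ∀ s, f s ≤ g s) : Eexp p f ≤ Eexp p g :=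
  Finset.sum_le_sum fun s _ => mul_le_mul_of_nonneg_left (h s) (hp.1 s)

lemma Eexp_const {p : S → ℝ} (hp : IsDist p) (c : ℝ) : Eexp p (fun _ => c) = c := by
  simp [Eexp, ← Finset.sum_mul, hp.2]

lemma Eexp_le {p f : S → ℝ} (hp : IsDist p) {c : ℝ} (h : ∀ s, f s ≤ c) : Eexp p f ≤ c :=
  (Eexp_mono hp h).trans_eq (Eexp_const hp c)

lemma le_Eexp {p f : S → ℝ} (hp : IsDist p) {c : ℝ} (h : ∀ s, c ≤ f s) : c ≤ Eexp p f :=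
  (Eexp_const hp c).symm.trans_le (Eexp_mono hp h)

lemma kerV_terminal {H : ℕ} (R : ℕ → S → A → ℝ) (Pk : ℕ → S → A → S → ℝ)
    (π : ℕ → S → A → ℝ) {h : ℕ} (hh : H + 1 ≤ h) (s : S) : kerV H R Pk π h s = 0 := by
  rw [kerV]; simp [hh]

lemma kerV_eq_Eexp_kerQ {H : ℕ} (R : ℕ → S → A → ℝ) (Pk : ℕ → S → A → S → ℝ)
    (π : ℕ → S → A → ℝ) {h : ℕ} (hh : h ≤ H) (s : S) :
    kerV H R Pk π h s = Eexp (π h s) (kerQ H R Pk π h s) := by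
  rw [kerV]
  simp [show ¬ (H + 1 ≤ h) by omega, Eexp, kerQ]

lemma exists_TV_minimizer {p₀ : S → ℝ} (hp₀ : IsDist p₀) {ρ : ℝ} (hρ : 0 ≤ ρ) (f : S → ℝ) :
    ∃ p, (IsDist p ∧ TV p p₀ ≤ ρ) ∧ ∀ q, IsDist q ∧ TV q p₀ ≤ ρ → Eexp p f ≤ Eexp q f := by
  have hcpt : IsCompact {p : S → ℝ | IsDist p ∧ TV p p₀ ≤ ρ} := by
    have hcl : IsClosed {p : S → ℝ | TV p p₀ ≤ ρ} :=
      isClosed_le (by unfold TV; fun_prop) continuous_const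
    exact (isCompact_stdSimplex ℝ S).inter_right hcl
  have hne : {p : S → ℝ | IsDist p ∧ TV p p₀ ≤ ρ}.Nonempty := ⟨p₀, hp₀, by simpa [TV] using hρ⟩
  have hcont : Continuous fun p : S → ℝ => Eexp p f := by unfold Eexp; fun_prop
  obtain ⟨p, hp, hmin⟩ := hcpt.exists_isMinOn hne hcont.continuousOn
  exact ⟨p, hp, fun q hq => hmin hq⟩

/-- Moving mass `ρ` to an arbitrary state `x` stays inside the TV ball of radius `ρ`. -/
lemma exists_TV_mixture {p₀ : S → ℝ} (hp₀ : IsDist p₀) {ρ : ℝ} (hρ0 : 0 ≤ ρ) (hρ1 : ρ ≤ 1)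
    (x : S) : ∃ p, (IsDist p ∧ TV p p₀ ≤ ρ) ∧
      ∀ f : S → ℝ, Eexp p f = (1 - ρ) * Eexp p₀ f + ρ * f x := by
  classical
  refine ⟨fun s => (1 - ρ) * p₀ s + ρ * (if s = x then 1 else 0), ⟨⟨fun s => ?_, ?_⟩, ?_⟩, ?_⟩
  · have := mul_nonneg (sub_nonneg.2 hρ1) (hp₀.1 s)
    dsimp only
    split_ifs <;> linarith
  · simp [Finset.sum_add_distrib, ← Finset.mul_sum, hp₀.2]
  · have hle : ∀ s, |(1 - ρ) * p₀ s + ρ * (if s = x then 1 else 0) - p₀ s|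
        ≤ ρ * (p₀ s + if s = x then 1 else 0) := by
      intro s
      have := mul_nonneg hρ0 (hp₀.1 s)
      rw [abs_le]
      split_ifs <;> constructor <;> nlinarith
    have hsum := Finset.sum_le_sum fun s (_ : s ∈ Finset.univ) => hle s
    rw [← Finset.mul_sum, Finset.sum_add_distrib, hp₀.2] at hsum
    simp only [Finset.sum_ite_eq', Finset.mem_univ, if_true] at hsum
    unfold TV
    linarith
  · intro f
    simp [Eexp, add_mul, Finset.sum_add_distrib, Finset.mul_sum, mul_assoc]

/-- Value function of `π` when the kernel at `(h, s, a)` is `m h s a f`, a prescribed reaction to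
the next value function `f`. -/
noncomputable def reactV (H : ℕ) (R : ℕ → S → A → ℝ) (π : ℕ → S → A → ℝ)
    (m : ℕ → S → A → (S → ℝ) → S → ℝ) (h : ℕ) : S → ℝ := fun s =>
  if _hle : H + 1 ≤ h then 0
  else ∑ a : A, π h s a *
    (R h s a + Eexp (m h s a (reactV H R π m (h + 1))) (reactV H R π m (h + 1)))
termination_by H + 1 - h
decreasing_by all_goals omega

lemma kerV_reactV (H : ℕ) (R : ℕ → S → A → ℝ) (π : ℕ → S → A → ℝ)
    (m : ℕ → S → A → (S → ℝ) → S → ℝ) (k h : ℕ) (hk : H + 1 ≤ h + k) :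
    kerV H R (fun h s a => m h s a (reactV H R π m (h + 1))) π h = reactV H R π m h := by
  induction k generalizing h with
  | zero =>
    funext s
    rw [kerV, reactV]
    simp [show H + 1 ≤ h by omega]
  | succ k ih =>
    funext s
    rw [kerV, reactV, ih (h + 1) (by omega)]

/-- Some admissible kernel collection is greedy against its own value function. -/
lemma exists_greedy_kernel (H : ℕ) (R : ℕ → S → A → ℝ) {ρ : ℝ} (hρ : 0 ≤ ρ)
    (P : ℕ → S → A → S → ℝ) (hP : ∀ h s a, 1 ≤ h → h ≤ H → IsDist (P h s a))
    (π : ℕ → S → A → ℝ) :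
    ∃ K, Admissible H (TVset ρ P) K ∧ ∀ h s a, 1 ≤ h → h ≤ H → ∀ q ∈ TVset ρ P h s a,
      Eexp (K h s a) (kerV H R K π (h + 1)) ≤ Eexp q (kerV H R K π (h + 1)) := by
  have hex : ∀ h s a (f : S → ℝ), ∃ p : S → ℝ, 1 ≤ h → h ≤ H →
      p ∈ TVset ρ P h s a ∧ ∀ q ∈ TVset ρ P h s a, Eexp p f ≤ Eexp q f := by
    intro h s a f
    by_cases hh : 1 ≤ h ∧ h ≤ H
    · obtain ⟨p, hp⟩ := exists_TV_minimizer (hP h s a hh.1 hh.2) hρ f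
      exact ⟨p, fun _ _ => hp⟩
    · exact ⟨f, fun h1 h2 => absurd ⟨h1, h2⟩ hh⟩
  choose m hm using hex
  refine ⟨fun h s a => m h s a (reactV H R π m (h + 1)), fun h s a h1 h2 => (hm h s a _ h1 h2).1,
    fun h s a h1 h2 q hq => ?_⟩
  rw [kerV_reactV H R π m (H + 1) (h + 1) (by omega)]
  exact (hm h s a _ h1 h2).2 q hq

lemma kerQ_le_of_kerV_le {H : ℕ} {R : ℕ → S → A → ℝ} {ρ : ℝ} {P : ℕ → S → A → S → ℝ}
    {π : ℕ → S → A → ℝ} {K Pk : ℕ → S → A → S → ℝ}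
    (hgr : ∀ h s a, 1 ≤ h → h ≤ H → ∀ q ∈ TVset ρ P h s a,
      Eexp (K h s a) (kerV H R K π (h + 1)) ≤ Eexp q (kerV H R K π (h + 1)))
    (hPk : Admissible H (TVset ρ P) Pk) {h : ℕ} (h1 : 1 ≤ h) (h2 : h ≤ H)
    (hV : ∀ s, kerV H R K π (h + 1) s ≤ kerV H R Pk π (h + 1) s) (s : S) (a : A) :
    kerQ H R K π h s a ≤ kerQ H R Pk π h s a := by
  have hmem := hPk h s a h1 h2
  unfold kerQ
  linarith [hgr h s a h1 h2 _ hmem, Eexp_mono hmem.1 hV]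

lemma kerV_le_of_greedy {H : ℕ} {R : ℕ → S → A → ℝ} {ρ : ℝ} {P : ℕ → S → A → S → ℝ}
    {π : ℕ → S → A → ℝ} (hπ : IsPolicy H π) {K Pk : ℕ → S → A → S → ℝ}
    (hgr : ∀ h s a, 1 ≤ h → h ≤ H → ∀ q ∈ TVset ρ P h s a,
      Eexp (K h s a) (kerV H R K π (h + 1)) ≤ Eexp q (kerV H R K π (h + 1)))
    (hPk : Admissible H (TVset ρ P) Pk) (k h : ℕ) (hk : H + 1 ≤ h + k) (h1 : 1 ≤ h) (s : S) :
    kerV H R K π h s ≤ kerV H R Pk π h s := by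
  induction k generalizing h s with
  | zero =>
    rw [kerV_terminal R K π (by omega), kerV_terminal R Pk π (by omega)]
  | succ k ih =>
    by_cases h2 : h ≤ H
    · rw [kerV_eq_Eexp_kerQ R K π h2, kerV_eq_Eexp_kerQ R Pk π h2]
      exact Eexp_mono (hπ h s h1 h2) fun a =>
        kerQ_le_of_kerV_le hgr hPk h1 h2 (fun s => ih (h + 1) (by omega) (by omega) s) s a
    · rw [kerV_terminal R K π (by omega), kerV_terminal R Pk π (by omega)]

/-- A single greedy admissible collection attains all the infima defining the robust value
functions. -/
lemma exists_worst_kernel (H : ℕ) (R : ℕ → S → A → ℝ) {ρ : ℝ} (hρ : 0 ≤ ρ)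
    (P : ℕ → S → A → S → ℝ) (hP : ∀ h s a, 1 ≤ h → h ≤ H → IsDist (P h s a))
    (π : ℕ → S → A → ℝ) (hπ : IsPolicy H π) :
    ∃ K, Admissible H (TVset ρ P) K ∧
      (∀ h s a, 1 ≤ h → h ≤ H → ∀ q ∈ TVset ρ P h s a,
        Eexp (K h s a) (kerV H R K π (h + 1)) ≤ Eexp q (kerV H R K π (h + 1))) ∧
      (∀ h s, 1 ≤ h → h ≤ H → robV H R (TVset ρ P) π h s = kerV H R K π h s) ∧
      (∀ h s a, 1 ≤ h → h ≤ H → robQ H R (TVset ρ P) π h s a = kerQ H R K π h s a) := by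
  obtain ⟨K, hK, hgr⟩ := exists_greedy_kernel H R hρ P hP π
  refine ⟨K, hK, hgr, fun h s h1 h2 => ?_, fun h s a h1 h2 => ?_⟩
  · refine IsLeast.csInf_eq ⟨⟨K, hK, rfl⟩, ?_⟩
    rintro x ⟨Pk, hPk, rfl⟩
    exact kerV_le_of_greedy hπ hgr hPk (H + 1) h (by omega) h1 s
  · refine IsLeast.csInf_eq ⟨⟨K, hK, rfl⟩, ?_⟩
    rintro x ⟨Pk, hPk, rfl⟩
    exact kerQ_le_of_kerV_le hgr hPk h1 h2
      (fun s => kerV_le_of_greedy hπ hgr hPk (H + 1) (h + 1) (by omega) (by omega) s) s a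

/-- One backward step: the `Q`-gap at step `h` is at most `1 + (1 - ρ) c` when the `V`-gap at step
`h + 1` is at most `c`. -/
lemma kerQ_gap_step [Nonempty S] {H : ℕ} {R : ℕ → S → A → ℝ} {ρ : ℝ} (hρ0 : 0 ≤ ρ) (hρ1 : ρ ≤ 1)
    (hR : ∀ h s a, 1 ≤ h → h ≤ H → 0 ≤ R h s a ∧ R h s a ≤ 1)
    {P : ℕ → S → A → S → ℝ} (hP : ∀ h s a, 1 ≤ h → h ≤ H → IsDist (P h s a))
    {π : ℕ → S → A → ℝ} {K : ℕ → S → A → S → ℝ} (hK : Admissible H (TVset ρ P) K)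
    (hgr : ∀ h s a, 1 ≤ h → h ≤ H → ∀ q ∈ TVset ρ P h s a,
      Eexp (K h s a) (kerV H R K π (h + 1)) ≤ Eexp q (kerV H R K π (h + 1)))
    {h : ℕ} (h1 : 1 ≤ h) (h2 : h ≤ H) {c : ℝ}
    (hc : ∀ s s', kerV H R K π (h + 1) s - kerV H R K π (h + 1) s' ≤ c) (s s' : S) (a a' : A) :
    kerQ H R K π h s a - kerQ H R K π h s' a' ≤ 1 + (1 - ρ) * c := by
  obtain ⟨x, hx⟩ := Finite.exists_min (kerV H R K π (h + 1))
  obtain ⟨p, hp, hpE⟩ := exists_TV_mixture (hP h s a h1 h2) hρ0 hρ1 x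
  have hup := hgr h s a h1 h2 p hp
  rw [hpE] at hup
  have hnom : Eexp (P h s a) (kerV H R K π (h + 1)) ≤ kerV H R K π (h + 1) x + c :=
    Eexp_le (hP h s a h1 h2) fun t => by linarith [hc t x]
  have hscaled := mul_le_mul_of_nonneg_left hnom (sub_nonneg.2 hρ1)
  have hlow := le_Eexp (hK h s' a' h1 h2).1 hx
  have hr := (hR h s a h1 h2).2
  have hr' := (hR h s' a' h1 h2).1
  unfold kerQ
  linarith

lemma kerV_gap_of_kerQ_gap {H : ℕ} {R : ℕ → S → A → ℝ} {π : ℕ → S → A → ℝ} (hπ : IsPolicy H π)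
    {K : ℕ → S → A → S → ℝ} {h : ℕ} (h1 : 1 ≤ h) (h2 : h ≤ H) {c : ℝ}
    (hc : ∀ s s' a a', kerQ H R K π h s a - kerQ H R K π h s' a' ≤ c) (s s' : S) :
    kerV H R K π h s - kerV H R K π h s' ≤ c := by
  rw [kerV_eq_Eexp_kerQ R K π h2, kerV_eq_Eexp_kerQ R K π h2, sub_le_iff_le_add]
  refine Eexp_le (hπ h s h1 h2) fun a => ?_
  rw [← sub_le_iff_le_add']
  exact le_Eexp (hπ h s' h1 h2) fun a' => by linarith [hc s s' a a']

lemma ciSup_sub_ciInf_le {ι : Type*} [Nonempty ι] {f : ι → ℝ} {c : ℝ}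
    (h : ∀ i j, f i - f j ≤ c) : (⨆ i, f i) - (⨅ i, f i) ≤ c := by
  rw [sub_le_iff_le_add]
  refine ciSup_le fun i => ?_
  rw [← sub_le_iff_le_add']
  exact le_ciInf fun j => by linarith [h i j]

end Helpers

/-- **Sharper gap bound for TV robust sets.** For an RMDP whose robust sets are TV robust
sets of radius `ρ ∈ (0,1)`, for every Markov policy `π` and every step `h ∈ {1,…,H}`, the
gaps `max Q^π_h - min Q^π_h` and `max V^π_h - min V^π_h` are bounded by
`(1 - (1-ρ)^{H-h+1})/ρ`. -/
theorem tv_robust_gap_sharp {S A : Type*} [Fintype S] [Fintype A] [Nonempty S] [Nonempty A]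
    (H : ℕ) (hH : 1 ≤ H) (ρ : ℝ) (hρ0 : 0 < ρ) (hρ1 : ρ < 1)
    (R : ℕ → S → A → ℝ) (hR : ∀ h s a, 1 ≤ h → h ≤ H → 0 ≤ R h s a ∧ R h s a ≤ 1)
    (P : ℕ → S → A → S → ℝ) (hP : ∀ h s a, 1 ≤ h → h ≤ H → IsDist (P h s a))
    (π : ℕ → S → A → ℝ) (hπ : IsPolicy H π) :
    ∀ h, 1 ≤ h → h ≤ H →
      (⨆ p : S × A, robQ H R (TVset ρ P) π h p.1 p.2)
          - (⨅ p : S × A, robQ H R (TVset ρ P) π h p.1 p.2)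
          ≤ (1 - (1 - ρ) ^ (H - h + 1)) / ρ ∧
      (⨆ s : S, robV H R (TVset ρ P) π h s)
          - (⨅ s : S, robV H R (TVset ρ P) π h s)
          ≤ (1 - (1 - ρ) ^ (H - h + 1)) / ρ := by
  obtain ⟨K, hK, hgr, hV, hQ⟩ := exists_worst_kernel H R hρ0.le P hP π hπ
  have hrec : ∀ k : ℕ, 1 + (1 - ρ) * ((1 - (1 - ρ) ^ k) / ρ) = (1 - (1 - ρ) ^ (k + 1)) / ρ := by
    intro k
    field_simp
    ring
  have hgapV : ∀ k h, h + k = H + 1 → 1 ≤ h → ∀ s s',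
      kerV H R K π h s - kerV H R K π h s' ≤ (1 - (1 - ρ) ^ k) / ρ := by
    intro k
    induction k with
    | zero =>
      intro h hk _ s s'
      rw [kerV_terminal R K π (by omega), kerV_terminal R K π (by omega)]
      simp
    | succ k ih =>
      intro h hk h1
      rw [← hrec]
      exact kerV_gap_of_kerQ_gap hπ h1 (by omega) fun s s' a a' =>
        kerQ_gap_step hρ0.le hρ1.le hR hP hK hgr h1 (by omega)
          (ih (h + 1) (by omega) (by omega)) s s' a a'
  intro h h1 h2
  constructor
  · refine ciSup_sub_ciInf_le fun i j => ?_
    rw [hQ h _ _ h1 h2, hQ h _ _ h1 h2, ← hrec]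
    exact kerQ_gap_step hρ0.le hρ1.le hR hP hK hgr h1 h2
      (hgapV (H - h) (h + 1) (by omega) (by omega)) _ _ _ _
  · refine ciSup_sub_ciInf_le fun i j => ?_
    rw [hV h _ h1 h2, hV h _ h1 h2]
    exact hgapV (H - h + 1) h (by omega) h1 i j
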